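/- For every randomized policy π, linear programming duality gives: min_{u∈Ũ(π)} bᵀu/(1−γ) = sup_{x∈ℝ^k} ( αᵀΦx − ∑_{(s,a)} π(s,a)·max(0, (AΦx − b)(s,a)) / (1−γ) ). -/

import Mathlib

open Matrix BigOperators

namespace DRADP

variable {S A K : Type*} [Fintype S] [Fintype A] [Fintype K] [DecidableEq S] [DecidableEq A]

/-- A randomized policy: nonnegative with rows summing to one. -/
def isPolicy (π : S → A → ℝ) : Prop :=
  (∀ s a, 0 ≤ π s a) ∧ ∀ s, ∑ a, π s a = 1

/-- The randomized policy corresponding to a deterministic policy `p : S → A`. -/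
def detPol (p : S → A) : S → A → ℝ := fun s a => if a = p s then 1 else 0

/-- Transition matrix `P_π` of a policy. -/
noncomputable def Pmat (P : S → A → S → ℝ) (π : S → A → ℝ) : Matrix S S ℝ :=
  Matrix.of fun s s' => ∑ a, P s a s' * π s a

/-- Reward vector `r_π` of a policy. -/
noncomputable def rvec (r : S → A → ℝ) (π : S → A → ℝ) : S → ℝ :=
  fun s => ∑ a, r s a * π s a

/-- State occupancy frequency `d_π = (1-γ)·∑_t γ^t (P_πᵀ)^t α`. -/
noncomputable def dOcc (P : S → A → S → ℝ) (α : S → ℝ) (γ : ℝ) (π : S → A → ℝ) : S → ℝ :=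
  fun s => (1 - γ) * ∑' t : ℕ, γ ^ t * (((Pmat P π)ᵀ ^ t) *ᵥ α) s

/-- State-action occupancy frequency `u_π(s,a) = d_π(s)·π(s,a)`. -/
noncomputable def uOcc (P : S → A → S → ℝ) (α : S → ℝ) (γ : ℝ) (π : S → A → ℝ) : S × A → ℝ :=
  fun w => dOcc P α γ π w.1 * π w.1 w.2

/-- Value function `v_π = ∑_t γ^t P_π^t r_π`. -/
noncomputable def vVal (P : S → A → S → ℝ) (r : S → A → ℝ) (γ : ℝ) (π : S → A → ℝ) : S → ℝ :=
  fun s => ∑' t : ℕ, γ ^ t * ((Pmat P π ^ t) *ᵥ rvec r π) s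

/-- The return `ρ(π) = αᵀ v_π`. -/
noncomputable def ret (P : S → A → S → ℝ) (r : S → A → ℝ) (α : S → ℝ) (γ : ℝ)
    (π : S → A → ℝ) : ℝ :=
  ∑ s, α s * vVal P r γ π s

/-- The matrix `A` with rows `A((s,a),·) = e_sᵀ − γ·P(s,a,·)`. -/
def Amat (P : S → A → S → ℝ) (γ : ℝ) : Matrix (S × A) S ℝ :=
  Matrix.of fun w s' => (if w.1 = s' then (1 : ℝ) else 0) - γ * P w.1 w.2 s'

/-- The vector `b(s,a) = r(s,a)`. -/
def bvec (r : S → A → ℝ) : S × A → ℝ := fun w => r w.1 w.2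

/-- `U = {u : u ≥ 0, Aᵀu = (1−γ)·α}`. -/
def Uset (P : S → A → S → ℝ) (α : S → ℝ) (γ : ℝ) : Set (S × A → ℝ) :=
  {u | (∀ w, 0 ≤ u w) ∧ (Amat P γ)ᵀ *ᵥ u = fun s => (1 - γ) * α s}

/-- The Bellman operator `L`. -/
noncomputable def bell (P : S → A → S → ℝ) (r : S → A → ℝ) (γ : ℝ) (v : S → ℝ) : S → ℝ :=
  fun s => ⨆ a : A, (r s a + γ * ∑ s', P s a s' * v s')

/-- A deterministic policy `p` is greedy w.r.t. `v`. -/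
def isGreedy (P : S → A → S → ℝ) (r : S → A → ℝ) (γ : ℝ) (p : S → A) (v : S → ℝ) : Prop :=
  ∀ s a, r s a + γ * ∑ s', P s a s' * v s' ≤ r s (p s) + γ * ∑ s', P s (p s) s' * v s'

/-- Approximate occupancy frequencies `Ũ(π)`. -/
def Utilde (P : S → A → S → ℝ) (α : S → ℝ) (γ : ℝ) (Φ : Matrix S K ℝ) (π : S → A → ℝ) :
    Set (S × A → ℝ) :=
  {u | (∀ w, 0 ≤ u w) ∧
    (Φᵀ *ᵥ ((Amat P γ)ᵀ *ᵥ u) = fun j => (1 - γ) * (Φᵀ *ᵥ α) j) ∧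
    ∀ w, u w ≤ π w.1 w.2}

/-- The distributionally robust return estimate
`ρ̃(π) = sup_{v∈Ṽ} (αᵀv − sup_{u∈Ũ(π)} uᵀ(Av − b)/(1−γ))`. -/
noncomputable def rhoTilde (P : S → A → S → ℝ) (r : S → A → ℝ) (α : S → ℝ) (γ : ℝ)
    (Φ : Matrix S K ℝ) (π : S → A → ℝ) : ℝ :=
  ⨆ x : K → ℝ, (∑ s, α s * (Φ *ᵥ x) s -
    sSup ((fun u : S × A → ℝ =>
      (∑ w, u w * ((Amat P γ *ᵥ (Φ *ᵥ x)) w - bvec r w)) / (1 - γ)) ''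
      Utilde P α γ Φ π))

/-- The set `G` of deterministic policies greedy w.r.t. some representable value function. -/
def greedySet (P : S → A → S → ℝ) (r : S → A → ℝ) (γ : ℝ) (Φ : Matrix S K ℝ) :
    Set (S → A → ℝ) :=
  {π | ∃ p : S → A, π = detPol p ∧ ∃ x : K → ℝ, isGreedy P r γ p (Φ *ᵥ x)}

end DRADP

open DRADP

/-!
Up to the factor `1 - γ`, the minimum is that of a linear program over the compact box `0 ≤ u ≤ π`
cut by the equality constraint `ΦᵀAᵀu = (1 - γ)Φᵀα`. Dualizing only the equality constraint leaves
an inner minimum of a linear functional over the box; it is attained coordinatewise at `0` or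
`π(s,a)` according to the sign of `(AΦx - b)(s,a)`, which produces the positive part. The multiplier
comes from separating the compact convex image of the box under `u ↦ (ΦᵀAᵀu, bᵀu)` from a vertical
ray; compactness replaces any constraint qualification, and feasibility prevents the separating
hyperplane from being vertical. Feasibility is witnessed by the occupancy frequency of `π`.
-/

section LagrangeDuality

variable {E F : Type*} [AddCommGroup E] [Module ℝ E] [TopologicalSpace E]
  [AddCommGroup F] [Module ℝ F] [TopologicalSpace F] [IsTopologicalAddGroup F]
  [ContinuousSMul ℝ F] [LocallyConvexSpace ℝ F] [T1Space F]

theorem exists_lagrange_multiplier_of_isCompact {X : Set E} (hX : Convex ℝ X)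
    (hXc : IsCompact X) (T : E →L[ℝ] F) (φ : StrongDual ℝ E) {c : F} {t : ℝ}
    (hfeas : ∃ u ∈ X, T u = c) (ht : ∀ u ∈ X, T u = c → t < φ u) :
    ∃ y : StrongDual ℝ F, ∀ u ∈ X, t < φ u + y (c - T u) := by
  have hdisj : Disjoint (T.prod φ '' X) ({c} ×ˢ Set.Iic t) := by
    rw [Set.disjoint_left]
    rintro _ ⟨u, hu, rfl⟩ ⟨huc, hut⟩
    exact (ht u hu huc).not_ge hut
  obtain ⟨f, a, b, hfa, hab, hfb⟩ := geometric_hahn_banach_compact_closed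
    (hX.linear_image (T.prod φ : E →ₗ[ℝ] F × ℝ)) (hXc.image (T.prod φ).continuous)
    ((convex_singleton c).prod (convex_Iic t)) (isClosed_singleton.prod isClosed_Iic) hdisj
  set y : StrongDual ℝ F := f.comp (.inl ℝ F ℝ)
  set l : ℝ := f (0, 1)
  have hf (z : F) (s : ℝ) : f (z, s) = y z + s * l := by
    rw [← smul_eq_mul, ← map_smul, ContinuousLinearMap.comp_apply, ← map_add]
    simp
  have hsep (u : E) (hu : u ∈ X) : y (T u) + φ u * l < y c + t * l := by
    rw [← hf, ← hf]
    exact (hfa _ ⟨u, hu, rfl⟩).trans (hab.trans (hfb _ ⟨rfl, Set.self_mem_Iic⟩))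
  have hl : 0 < -l := by
    obtain ⟨u, hu, rfl⟩ := hfeas
    nlinarith [hsep u hu, ht u hu rfl]
  refine ⟨(-l)⁻¹ • y, fun u hu ↦ ?_⟩
  have hgap : (t - φ u) * -l < y (c - T u) := by
    rw [map_sub]
    linarith [hsep u hu]
  rw [_root_.smul_apply, smul_eq_mul, ← sub_lt_iff_lt_add', inv_mul_eq_div,
    lt_div_iff₀ hl]
  exact hgap

end LagrangeDuality

section BoxSupport

variable {R W : Type*} [Ring R] [LinearOrder R] [Fintype W]

theorem dotProduct_le_dotProduct_posPart [IsOrderedRing R] {u p : W → R}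
    (hu : u ∈ Set.Icc 0 p) (g : W → R) : u ⬝ᵥ g ≤ p ⬝ᵥ g⁺ :=
  Finset.sum_le_sum fun w _ ↦
    (mul_le_mul_of_nonneg_left (le_posPart (g w)) (hu.1 w)).trans
      (mul_le_mul_of_nonneg_right (hu.2 w) (posPart_nonneg (g w)))

theorem exists_mem_Icc_dotProduct_eq_dotProduct_posPart {p : W → R} (hp : 0 ≤ p) (g : W → R) :
    ∃ u ∈ Set.Icc 0 p, u ⬝ᵥ g = p ⬝ᵥ g⁺ := by
  refine ⟨fun w ↦ if 0 ≤ g w then p w else 0, ⟨fun w ↦ ?_, fun w ↦ ?_⟩,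
    Finset.sum_congr rfl fun w _ ↦ ?_⟩
  · dsimp only
    split_ifs
    exacts [hp w, le_rfl]
  · dsimp only
    split_ifs
    exacts [le_rfl, hp w]
  · rw [Pi.posPart_apply]
    dsimp only
    split_ifs with hg
    · rw [posPart_of_nonneg hg]
    · rw [posPart_of_nonpos (not_le.1 hg).le, zero_mul, mul_zero]

end BoxSupport

theorem dotProduct_add_dotProduct_sub_vecMul {R W K : Type*} [CommRing R] [Fintype W] [Fintype K]
    (M : Matrix W K R) (c : K → R) (b u : W → R) (x : K → R) :
    b ⬝ᵥ u + x ⬝ᵥ (c - u ᵥ* M) = c ⬝ᵥ x - u ⬝ᵥ (M *ᵥ x - b) := by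
  rw [dotProduct_sub, dotProduct_sub, dotProduct_mulVec, dotProduct_comm x c,
    dotProduct_comm x (u ᵥ* M), dotProduct_comm b u]
  ring

section BoxLP

variable {W K : Type*} [Fintype W]
  (M : Matrix W K ℝ) (c : K → ℝ) (b p : W → ℝ)

/-- The feasible set of the box-constrained linear program
`min bᵀu` subject to `0 ≤ u ≤ p` and `uᵀM = cᵀ`. -/
def boxFeasible : Set (W → ℝ) :=
  {u ∈ Set.Icc 0 p | u ᵥ* M = c}

/-- The dual objective of the box-constrained linear program `min bᵀu` over `boxFeasible M c p`:
`x` is the multiplier of `uᵀM = cᵀ`, and the multipliers of the box are eliminated. -/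
def boxDual [Fintype K] (x : K → ℝ) : ℝ :=
  c ⬝ᵥ x - p ⬝ᵥ (M *ᵥ x - b)⁺

variable {M c b p}

theorem isCompact_boxFeasible : IsCompact (boxFeasible M c p) :=
  isCompact_Icc.inter_right
    (isClosed_singleton.preimage (continuous_id.matrix_vecMul continuous_const))

variable [Fintype K]

theorem boxDual_le_dotProduct {u : W → ℝ} (hu : u ∈ boxFeasible M c p) (x : K → ℝ) :
    boxDual M c b p x ≤ b ⬝ᵥ u :=
  calc boxDual M c b p x ≤ c ⬝ᵥ x - u ⬝ᵥ (M *ᵥ x - b) :=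
        sub_le_sub_left (dotProduct_le_dotProduct_posPart hu.1 _) _
    _ = b ⬝ᵥ u := by
        rw [← dotProduct_add_dotProduct_sub_vecMul, hu.2, sub_self, dotProduct_zero, add_zero]

theorem exists_lt_boxDual (hne : (boxFeasible M c p).Nonempty) {t : ℝ}
    (ht : ∀ u ∈ boxFeasible M c p, t < b ⬝ᵥ u) : ∃ x, t < boxDual M c b p x := by
  classical
  obtain ⟨u₀, ⟨hu₀, hu₀p⟩, hu₀c⟩ := hne
  obtain ⟨y, hy⟩ := exists_lagrange_multiplier_of_isCompact (convex_Icc 0 p) isCompact_Icc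
    M.vecMulLinear.toContinuousLinearMap (dotProductEquiv ℝ W b).toContinuousLinearMap
    ⟨u₀, ⟨hu₀, hu₀p⟩, hu₀c⟩ (fun u hu huc ↦ ht u ⟨hu, huc⟩)
  obtain ⟨x, hx⟩ := (dotProductEquiv ℝ K).surjective y.toLinearMap
  have hlagrangian (u : W → ℝ) (hu : u ∈ Set.Icc 0 p) :
      t < b ⬝ᵥ u + x ⬝ᵥ (c - u ᵥ* M) :=
    (hy u hu).trans_eq (congrArg (b ⬝ᵥ u + ·) (LinearMap.congr_fun hx.symm _))
  obtain ⟨u, hu, hug⟩ :=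
    exists_mem_Icc_dotProduct_eq_dotProduct_posPart (hu₀.trans hu₀p) (M *ᵥ x - b)
  refine ⟨x, ?_⟩
  rw [boxDual, ← hug, ← dotProduct_add_dotProduct_sub_vecMul]
  exact hlagrangian u hu

theorem exists_isLeast_boxFeasible_isLUB_boxDual (hne : (boxFeasible M c p).Nonempty) :
    ∃ m, IsLeast ((b ⬝ᵥ ·) '' boxFeasible M c p) m ∧ IsLUB (Set.range (boxDual M c b p)) m := by
  obtain ⟨m, hm⟩ := (isCompact_boxFeasible.image
    (continuous_const.dotProduct continuous_id)).exists_isLeast (hne.image (b ⬝ᵥ ·))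
  refine ⟨m, hm, ?_, fun d hd ↦ le_of_forall_lt fun t ht ↦ ?_⟩
  · obtain ⟨u, hu, rfl⟩ := hm.1
    exact Set.forall_mem_range.2 (boxDual_le_dotProduct hu)
  · obtain ⟨x, hx⟩ := exists_lt_boxDual hne
      fun u hu ↦ ht.trans_le (hm.2 (Set.mem_image_of_mem _ hu))
    exact hx.trans_le (hd (Set.mem_range_self x))

end BoxLP

section DiscountedSum

variable {γ : ℝ} {f : ℕ → ℝ}

theorem summable_geometric_mul_of_mem_Icc (hγ0 : 0 ≤ γ) (hγ1 : γ < 1)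
    (hf : ∀ t, f t ∈ Set.Icc 0 1) : Summable fun t ↦ γ ^ t * f t :=
  .of_nonneg_of_le (fun t ↦ mul_nonneg (pow_nonneg hγ0 t) (hf t).1)
    (fun t ↦ mul_le_of_le_one_right (pow_nonneg hγ0 t) (hf t).2)
    (summable_geometric_of_lt_one hγ0 hγ1)

theorem one_sub_mul_tsum_geometric_mul_mem_Icc (hγ0 : 0 ≤ γ) (hγ1 : γ < 1)
    (hf : ∀ t, f t ∈ Set.Icc 0 1) : (1 - γ) * ∑' t, γ ^ t * f t ∈ Set.Icc 0 1 := by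
  have hpos : 0 < 1 - γ := sub_pos.2 hγ1
  have hle : ∑' t, γ ^ t * f t ≤ (1 - γ)⁻¹ :=
    calc ∑' t, γ ^ t * f t ≤ ∑' t, γ ^ t :=
          (summable_geometric_mul_of_mem_Icc hγ0 hγ1 hf).tsum_le_tsum
            (fun t ↦ mul_le_of_le_one_right (pow_nonneg hγ0 t) (hf t).2)
            (summable_geometric_of_lt_one hγ0 hγ1)
      _ = (1 - γ)⁻¹ := tsum_geometric_of_lt_one hγ0 hγ1
  refine ⟨mul_nonneg hpos.le (tsum_nonneg fun t ↦ mul_nonneg (pow_nonneg hγ0 t) (hf t).1), ?_⟩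
  rwa [← le_inv_mul_iff₀ hpos, mul_one]

end DiscountedSum

theorem eq_add_map_of_hasSum {E : Type*} [AddCommGroup E] [TopologicalSpace E]
    [IsTopologicalAddGroup E] [T2Space E] {T : E →+ E} (hT : Continuous T) {x : ℕ → E}
    (hx : ∀ t, x (t + 1) = T (x t)) {d : E} (hd : HasSum x d) : d = x 0 + T d := by
  have htail : HasSum (fun t ↦ x (t + 1)) (T d) := by
    simpa only [Function.comp_def, hx] using hd.map T hT
  exact hd.unique htail.zero_add

theorem mulVec_mem_stdSimplex {R n : Type*} [Semiring R] [PartialOrder R] [IsOrderedRing R]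
    [Fintype n] [DecidableEq n] {Q : Matrix n n R} (hQ : Q ∈ colStochastic R n) {x : n → R}
    (hx : x ∈ stdSimplex R n) : Q *ᵥ x ∈ stdSimplex R n :=
  ⟨nonneg_mulVec_of_mem_colStochastic hQ hx.1, (sum_mulVec_of_mem_colStochastic hQ).trans hx.2⟩

namespace DRADP

section Occupancy

variable {S A : Type*} [Fintype S] [Fintype A] [DecidableEq S] {P : S → A → S → ℝ}
  {α : S → ℝ} {γ : ℝ} {π : S → A → ℝ}

theorem Pmat_mem_rowStochastic (hP : ∀ s a s', 0 ≤ P s a s') (hPsum : ∀ s a, ∑ s', P s a s' = 1)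
    (hπ : isPolicy π) : Pmat P π ∈ rowStochastic ℝ S := by
  refine mem_rowStochastic_iff_sum.2
    ⟨fun s s' ↦ Finset.sum_nonneg fun a _ ↦ mul_nonneg (hP s a s') (hπ.1 s a), fun s ↦ ?_⟩
  simp only [Pmat, of_apply]
  rw [Finset.sum_comm]
  simp only [← Finset.sum_mul, hPsum, one_mul, hπ.2]

theorem transpose_Pmat_pow_mulVec_mem_stdSimplex (hPπ : Pmat P π ∈ rowStochastic ℝ S)
    (hα : α ∈ stdSimplex ℝ S) (t : ℕ) : (Pmat P π)ᵀ ^ t *ᵥ α ∈ stdSimplex ℝ S :=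
  mulVec_mem_stdSimplex
    (pow_mem (transpose_mem_colStochastic_iff_mem_rowStochastic.2 hPπ) t) hα

theorem dOcc_mem_Icc (hPπ : Pmat P π ∈ rowStochastic ℝ S) (hα : α ∈ stdSimplex ℝ S)
    (hγ0 : 0 ≤ γ) (hγ1 : γ < 1) (s : S) : dOcc P α γ π s ∈ Set.Icc 0 1 :=
  one_sub_mul_tsum_geometric_mul_mem_Icc hγ0 hγ1 fun t ↦
    mem_Icc_of_mem_stdSimplex (transpose_Pmat_pow_mulVec_mem_stdSimplex hPπ hα t) s

theorem dOcc_eq_add_mulVec_dOcc (hPπ : Pmat P π ∈ rowStochastic ℝ S) (hα : α ∈ stdSimplex ℝ S)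
    (hγ0 : 0 ≤ γ) (hγ1 : γ < 1) :
    dOcc P α γ π = (1 - γ) • α + γ • ((Pmat P π)ᵀ *ᵥ dOcc P α γ π) := by
  set Q := (Pmat P π)ᵀ
  let d : S → ℝ := fun s ↦ ∑' t : ℕ, γ ^ t * (Q ^ t *ᵥ α) s
  have hd : HasSum (fun t : ℕ ↦ γ ^ t • (Q ^ t *ᵥ α)) d :=
    Pi.hasSum.2 fun s ↦ (summable_geometric_mul_of_mem_Icc hγ0 hγ1 fun t ↦
      mem_Icc_of_mem_stdSimplex (transpose_Pmat_pow_mulVec_mem_stdSimplex hPπ hα t) s).hasSum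
  have hfix : d = α + γ • (Q *ᵥ d) := by
    have hrec (t : ℕ) : γ ^ (t + 1) • (Q ^ (t + 1) *ᵥ α) =
        (γ • Q.mulVecLin).toAddMonoidHom (γ ^ t • (Q ^ t *ᵥ α)) := by
      simp [smul_smul, pow_succ' Q, pow_succ γ, mulVec_mulVec]
    simpa using eq_add_map_of_hasSum
      (γ • Q.mulVecLin).continuous_of_finiteDimensional hrec hd
  have hdOcc : dOcc P α γ π = (1 - γ) • d := rfl
  rw [hdOcc, mulVec_smul, smul_comm γ, ← smul_add, ← hfix]

theorem transpose_Amat_mulVec_mul_policy (hπ : ∀ s, ∑ a, π s a = 1) (d : S → ℝ) :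
    (Amat P γ)ᵀ *ᵥ (fun w ↦ d w.1 * π w.1 w.2) = d - γ • ((Pmat P π)ᵀ *ᵥ d) := by
  ext s'
  have hterm (s : S) : ∑ a, Amat P γ (s, a) s' * (d s * π s a) =
      (if s = s' then d s else 0) - γ * (Pmat P π s s' * d s) := by
    calc ∑ a, Amat P γ (s, a) s' * (d s * π s a)
        = ∑ a, ((if s = s' then d s else 0) * π s a - γ * (P s a s' * π s a * d s)) := by
          refine Finset.sum_congr rfl fun a _ ↦ ?_
          simp only [Amat, of_apply]
          split_ifs <;> ring
      _ = (if s = s' then d s else 0) - γ * (Pmat P π s s' * d s) := by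
          rw [Finset.sum_sub_distrib, ← Finset.mul_sum, hπ, mul_one, ← Finset.mul_sum,
            ← Finset.sum_mul]
          rfl
  calc ((Amat P γ)ᵀ *ᵥ fun w ↦ d w.1 * π w.1 w.2) s'
      = ∑ s, ∑ a, Amat P γ (s, a) s' * (d s * π s a) := Fintype.sum_prod_type _
    _ = (d - γ • ((Pmat P π)ᵀ *ᵥ d)) s' := by
        simp [hterm, Finset.mul_sum, mulVec, dotProduct]

theorem uOcc_mem_Uset (hPπ : Pmat P π ∈ rowStochastic ℝ S) (hα : α ∈ stdSimplex ℝ S)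
    (hγ0 : 0 ≤ γ) (hγ1 : γ < 1) (hπ : isPolicy π) : uOcc P α γ π ∈ Uset P α γ := by
  refine ⟨fun w ↦ mul_nonneg (dOcc_mem_Icc hPπ hα hγ0 hγ1 w.1).1 (hπ.1 w.1 w.2), ?_⟩
  exact (transpose_Amat_mulVec_mul_policy hπ.2 _).trans
    (sub_eq_of_eq_add (dOcc_eq_add_mulVec_dOcc hPπ hα hγ0 hγ1))

theorem uOcc_le_policy (hPπ : Pmat P π ∈ rowStochastic ℝ S) (hα : α ∈ stdSimplex ℝ S)
    (hγ0 : 0 ≤ γ) (hγ1 : γ < 1) (hπ : ∀ s a, 0 ≤ π s a) (w : S × A) :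
    uOcc P α γ π w ≤ π w.1 w.2 :=
  mul_le_of_le_one_left (hπ w.1 w.2) (dOcc_mem_Icc hPπ hα hγ0 hγ1 w.1).2

end Occupancy

section Duality

variable {S A K : Type*} [Fintype S] [Fintype A] [DecidableEq S] {P : S → A → S → ℝ}
  {r : S → A → ℝ} {α : S → ℝ} {γ : ℝ} {Φ : Matrix S K ℝ} {π : S → A → ℝ}

theorem mem_Utilde_of_mem_Uset {u : S × A → ℝ} (hu : u ∈ Uset P α γ)
    (huπ : ∀ w, u w ≤ π w.1 w.2) : u ∈ Utilde P α γ Φ π :=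
  ⟨hu.1, hu.2 ▸ mulVec_smul Φᵀ (1 - γ) α, huπ⟩

theorem Utilde_eq_boxFeasible :
    Utilde P α γ Φ π =
      boxFeasible (Amat P γ * Φ) ((1 - γ) • (α ᵥ* Φ)) (fun w ↦ π w.1 w.2) := by
  ext u
  simp only [Utilde, boxFeasible, mulVec_transpose, vecMul_vecMul]
  exact ⟨fun ⟨h0, hflow, hp⟩ ↦ ⟨⟨h0, hp⟩, hflow⟩, fun ⟨⟨h0, hp⟩, hflow⟩ ↦ ⟨h0, hflow, hp⟩⟩

theorem boxDual_div_one_sub [Fintype K] (hγ : γ ≠ 1) (x : K → ℝ) :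
    boxDual (Amat P γ * Φ) ((1 - γ) • (α ᵥ* Φ)) (bvec r) (fun w ↦ π w.1 w.2) x / (1 - γ) =
      ∑ s, α s * (Φ *ᵥ x) s -
        (∑ w : S × A, π w.1 w.2 * max 0 ((Amat P γ *ᵥ (Φ *ᵥ x)) w - bvec r w)) / (1 - γ) := by
  rw [boxDual, sub_div, smul_dotProduct, smul_eq_mul,
    mul_div_cancel_left₀ _ (sub_ne_zero.2 hγ.symm), ← dotProduct_mulVec, ← mulVec_mulVec]
  simp only [dotProduct, Pi.posPart_apply, posPart_def, Pi.sub_apply, max_comm]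

end Duality

end DRADP

theorem Utilde_min_duality_general {S A K : Type*} [Fintype S] [Fintype A] [Fintype K]
    [DecidableEq S] (P : S → A → S → ℝ) (r : S → A → ℝ) (α : S → ℝ) {γ : ℝ} (Φ : Matrix S K ℝ)
    (hγ1 : γ < 1) (π : S → A → ℝ) (hne : (Utilde P α γ Φ π).Nonempty) :
    ∃ m, IsLeast ((fun u : S × A → ℝ => (∑ w, bvec r w * u w) / (1 - γ)) '' Utilde P α γ Φ π) m ∧
      IsLUB (Set.range fun x : K → ℝ => ∑ s, α s * (Φ *ᵥ x) s -
        (∑ w : S × A, π w.1 w.2 * max 0 ((Amat P γ *ᵥ (Φ *ᵥ x)) w - bvec r w)) / (1 - γ)) m := by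
  rw [Utilde_eq_boxFeasible] at hne ⊢
  obtain ⟨m, hmin, hsup⟩ := exists_isLeast_boxFeasible_isLUB_boxDual (b := bvec r) hne
  let scale : ℝ ≃o ℝ := OrderIso.divRight₀ (1 - γ) (sub_pos.2 hγ1)
  refine ⟨scale m, ?_, ?_⟩
  · have h := scale.monotone.map_isLeast hmin
    rwa [Set.image_image] at h
  · have h := scale.isLUB_image'.2 hsup
    simp only [← boxDual_div_one_sub hγ1.ne]
    rwa [← Set.range_comp] at h

/-- LP duality:
`min_{u∈Ũ(π)} bᵀu/(1−γ) = sup_x (αᵀΦx − ∑_{(s,a)} π(s,a)·max(0,(AΦx−b)(s,a))/(1−γ))`. -/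
theorem Utilde_min_duality {S A K : Type*} [Fintype S] [Fintype A] [Fintype K] [DecidableEq S]
    (P : S → A → S → ℝ) (r : S → A → ℝ) (α : S → ℝ) (γ : ℝ) (Φ : Matrix S K ℝ)
    (hP : ∀ s a s', 0 ≤ P s a s') (hPsum : ∀ s a, ∑ s', P s a s' = 1)
    (hα : ∀ s, 0 ≤ α s) (hαsum : ∑ s, α s = 1)
    (hγ0 : 0 ≤ γ) (hγ1 : γ < 1)
    (π : S → A → ℝ) (hπ : isPolicy π) :
    sInf ((fun u : S × A → ℝ => (∑ w, bvec r w * u w) / (1 - γ)) '' Utilde P α γ Φ π) =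
      ⨆ x : K → ℝ, (∑ s, α s * (Φ *ᵥ x) s -
        (∑ w : S × A, π w.1 w.2 * max 0 ((Amat P γ *ᵥ (Φ *ᵥ x)) w - bvec r w)) / (1 - γ)) := by
  have hPπ := Pmat_mem_rowStochastic hP hPsum hπ
  have hocc : uOcc P α γ π ∈ Utilde P α γ Φ π :=
    mem_Utilde_of_mem_Uset (uOcc_mem_Uset hPπ ⟨hα, hαsum⟩ hγ0 hγ1 hπ)
      (uOcc_le_policy hPπ ⟨hα, hαsum⟩ hγ0 hγ1 hπ.1)
  obtain ⟨m, hmin, hsup⟩ := Utilde_min_duality_general P r α Φ hγ1 π ⟨_, hocc⟩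
  rw [hmin.csInf_eq, hsup.ciSup_eq]
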